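/- Let p > 3 be a prime. Then ∑_{k=1}^{(p-1)/2} (C(2k,k)²/16^k) · H_k^{(2)} ≡ −4·E_{p-3} (mod p). -/

import Mathlib

/-- `H n` is the harmonic number `∑_{k=1}^n 1/k`. -/
def H (n : ℕ) : ℚ := ∑ k ∈ Finset.Icc 1 n, (1 : ℚ) / k

/-- `H2 n` is the second-order harmonic number `∑_{k=1}^n 1/k²`. -/
def H2 (n : ℕ) : ℚ := ∑ k ∈ Finset.Icc 1 n, (1 : ℚ) / k ^ 2

/-- The Euler numbers: `E 0 = 1` and `∑_{0 ≤ k ≤ n, k even} C(n,k) E_{n-k} = 0` for `n ≥ 1`. -/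
def eulerNumber : ℕ → ℚ
  | 0 => 1
  | n + 1 =>
      -∑ j ∈ (Finset.range (n + 1)).attach,
        if Even (n + 1 - j.1) then ((n + 1).choose (n + 1 - j.1) : ℚ) * eulerNumber j.1 else 0
decreasing_by exact Finset.mem_range.mp j.2

/-- For rationals, `a ≡ b (mod m)` : `m` divides the numerator of `a - b` in lowest terms. -/
def ratModEq (m : ℕ) (a b : ℚ) : Prop := (m : ℤ) ∣ (a - b).num


/-- product form of `(-1)^k C(x,k) C(x+k,k)`. -/
def aSeq {K : Type*} [Field K] (x : K) (k : ℕ) : K :=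
  ∏ i ∈ Finset.range k, (-((x - i) * (x + i + 1)) / ((i : K) + 1) ^ 2)

/-- second-order harmonic number in a field. -/
def hSeq (K : Type*) [Field K] (k : ℕ) : K :=
  ∑ i ∈ Finset.range k, 1 / ((i : K) + 1) ^ 2

section
variable {K : Type*} [Field K]

theorem aSeq_succ (x : K) (k : ℕ) (hk : (k : K) + 1 ≠ 0) :
    aSeq x (k + 1) * ((k : K) + 1) ^ 2 = -((x - k) * (x + k + 1)) * aSeq x k := by
  unfold aSeq
  rw [Finset.prod_range_succ]
  field_simp

theorem aSeq_zero_of_lt (n k : ℕ) (h : n < k) : aSeq (n : K) k = 0 := by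
  unfold aSeq
  apply Finset.prod_eq_zero (Finset.mem_range.mpr h)
  simp

theorem aSeq_inv (x : K) (k : ℕ) (hk : ∀ i < k, (i : K) + 1 ≠ 0) :
    aSeq (x + 1) k * (x + 1 - k) = aSeq x k * (x + 1 + k) := by
  induction k with
  | zero => simp [aSeq]
  | succ k ih =>
    have ih := ih (fun i hi => hk i (by omega))
    have h0 := hk k (by omega)
    have h1 := aSeq_succ (x + 1) k h0
    have h2 := aSeq_succ x k h0
    apply mul_right_cancel₀ (pow_ne_zero 2 h0)
    push_cast
    linear_combination (x - k) * h1 - (x + 2 + k) * h2 - (x - k) * (x + 2 + k) * ih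

theorem bSeq_succ (x : K) (k : ℕ) (hk : ∀ i < k + 1, (i : K) + 1 ≠ 0) :
    (aSeq (x + 1) (k + 1) + aSeq x (k + 1)) * ((k : K) + 1) ^ 2
      = ((k : K) ^ 2 - (x + 1) ^ 2) * (aSeq (x + 1) k + aSeq x k) := by
  have h0 := hk k (by omega)
  have h1 := aSeq_succ (x + 1) k h0
  have h2 := aSeq_succ x k h0
  have h3 := aSeq_inv x k (fun i hi => hk i (by omega))
  linear_combination h1 + h2 - h3

theorem bSum (b : ℕ → K) (y : K) (M : ℕ)
    (hb : ∀ k ≤ M, b (k + 1) * ((k : K) + 1) ^ 2 = ((k : K) ^ 2 - y ^ 2) * b k) :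
    y ^ 2 * ∑ k ∈ Finset.range (M + 1), b k = -(b (M + 1) * ((M : K) + 1) ^ 2) := by
  induction M with
  | zero =>
    have := hb 0 le_rfl
    simp at this ⊢
    linear_combination this
  | succ M ih =>
    have ih := ih (fun k hk => hb k (by omega))
    have := hb (M + 1) le_rfl
    rw [Finset.sum_range_succ, mul_add, ih]
    push_cast at this ⊢
    linear_combination this

theorem bhSum (b : ℕ → K) (y : K) (M : ℕ) (hM : ∀ k ≤ M, (k : K) + 1 ≠ 0)
    (hb : ∀ k ≤ M, b (k + 1) * ((k : K) + 1) ^ 2 = ((k : K) ^ 2 - y ^ 2) * b k) :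
    y ^ 2 * ∑ k ∈ Finset.range (M + 1), b k * hSeq K k
      = ∑ k ∈ Finset.range (M + 1), b k - b 0 - b (M + 1) * ((M : K) + 1) ^ 2 * hSeq K M := by
  induction M with
  | zero => simp [hSeq]
  | succ M ih =>
    have ih := ih (fun k hk => hM k (by omega)) (fun k hk => hb k (by omega))
    have h1 := hb (M + 1) le_rfl
    have h0 := hM M (by omega)
    have hh : (hSeq K (M + 1) - hSeq K M) * ((M : K) + 1) ^ 2 = 1 := by
      unfold hSeq
      rw [Finset.sum_range_succ]
      field_simp
      ring
    rw [Finset.sum_range_succ, mul_add, ih, Finset.sum_range_succ _ (M + 1)]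
    push_cast at h1 ⊢
    linear_combination hSeq K (M + 1) * h1 + b (M + 1) * hh

theorem S_step (N n : ℕ) (hN : ∀ k ≤ N, (k : K) + 1 ≠ 0) (hn : n + 1 ≤ N) :
    ((n : K) + 1) ^ 2 * (∑ k ∈ Finset.range (N + 1), aSeq ((n + 1 : ℕ) : K) k * hSeq K k
      + ∑ k ∈ Finset.range (N + 1), aSeq (n : K) k * hSeq K k) = -2 := by
  have hb : ∀ k ≤ N, (fun k => aSeq ((n : K) + 1) k + aSeq (n : K) k) (k + 1) * ((k : K) + 1) ^ 2
      = ((k : K) ^ 2 - ((n : K) + 1) ^ 2) * (fun k => aSeq ((n : K) + 1) k + aSeq (n : K) k) k := by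
    intro k hk
    exact bSeq_succ (n : K) k (fun i hi => hN i (by omega))
  have h1 := bSum (fun k => aSeq ((n : K) + 1) k + aSeq (n : K) k) ((n : K) + 1) N hb
  have h2 := bhSum (fun k => aSeq ((n : K) + 1) k + aSeq (n : K) k) ((n : K) + 1) N hN hb
  have z1 : aSeq ((n : K) + 1) (N + 1) = 0 := by
    have := aSeq_zero_of_lt (K := K) (n + 1) (N + 1) (by omega)
    exact_mod_cast this
  have z2 : aSeq (n : K) (N + 1) = 0 := aSeq_zero_of_lt n (N + 1) (by omega)
  simp only [z1, z2] at h1 h2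
  have hne : ((n : K) + 1) ^ 2 ≠ 0 := pow_ne_zero 2 (hN n (by omega))
  have h3 : ∑ k ∈ Finset.range (N + 1), (aSeq ((n : K) + 1) k + aSeq (n : K) k) = 0 := by
    apply mul_left_cancel₀ hne
    rw [h1]; ring
  rw [h3] at h2
  rw [← Finset.sum_add_distrib]
  push_cast
  simp only [← add_mul]
  rw [h2]
  simp [aSeq]
  ring

theorem S_eval (N n : ℕ) (hN : ∀ k ≤ N, (k : K) + 1 ≠ 0) (hn : n ≤ N) :
    ∑ k ∈ Finset.range (N + 1), aSeq (n : K) k * hSeq K k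
      = -2 * (-1) ^ n * ∑ k ∈ Finset.range n, (-1) ^ (k + 1) / ((k : K) + 1) ^ 2 := by
  induction n with
  | zero =>
    rw [Finset.sum_eq_zero]
    · simp
    · intro k _
      rcases Nat.eq_zero_or_pos k with h | h
      · subst h; simp [hSeq]
      · rw [aSeq_zero_of_lt 0 k h, zero_mul]
  | succ n ih =>
    have ih := ih (by omega)
    have h := S_step N n hN hn
    rw [ih] at h
    have h0 := hN n (by omega)
    have hs : ((-1 : K) ^ n) * (-1) ^ n = 1 := by rw [← mul_pow]; simp
    apply mul_left_cancel₀ (pow_ne_zero 2 h0)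
    rw [Finset.sum_range_succ _ n]
    have : ((n : K) + 1) ^ 2 * ((-1) ^ (n + 1) / ((n : K) + 1) ^ 2) = (-1) ^ (n + 1) := by
      field_simp
    rw [pow_succ (-1 : K) n] at this ⊢
    linear_combination h - 2 * (-1) ^ n * this + 2 * hs

theorem choose_eq_aSeq (x : K) (hx : 2 * x = -1) (h2 : (2 : K) ≠ 0) (k : ℕ)
    (hk : ∀ i < k, (i : K) + 1 ≠ 0) :
    ((2 * k).choose k : K) ^ 2 = 16 ^ k * aSeq x k := by
  induction k with
  | zero => simp [aSeq]
  | succ k ih =>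
    have ih := ih (fun i hi => hk i (by omega))
    have h0 := hk k (by omega)
    have h1 := aSeq_succ x k h0
    have hc : ((k : K) + 1) * ((2 * (k + 1)).choose (k + 1) : K)
        = 2 * (2 * k + 1) * ((2 * k).choose k : K) := by
      have := Nat.succ_mul_centralBinom_succ k
      simp only [Nat.centralBinom] at this
      have := congrArg (Nat.cast : ℕ → K) this
      push_cast at this
      exact this
    apply mul_left_cancel₀ (pow_ne_zero 2 h0)
    rw [← mul_pow, hc, pow_succ]
    have hx2 : 16 * (-((x - k) * (x + k + 1))) = 4 * (2 * (k : K) + 1) ^ 2 := by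
      linear_combination (-8 * x - 4) * hx
    linear_combination (4 * (2 * (k : K) + 1) ^ 2) * ih - 16 ^ k * 16 * h1
      - 16 ^ k * aSeq x k * hx2

/-- Euler polynomial facts -/
def eP (e : ℕ → K) (m : ℕ) (x : K) : K :=
  ∑ j ∈ Finset.range (m + 1), (m.choose j : K) * e j * x ^ (m - j)

theorem eP_add (e : ℕ → K) (he : ∀ n, ∑ j ∈ Finset.range (n + 1),
      (if Even (n - j) then (n.choose j : K) * e j else 0) = if n = 0 then 1 else 0)
    (m : ℕ) (x : K) : eP e m (x + 1) + eP e m (x - 1) = 2 * x ^ m := by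
  unfold eP
  rw [← Finset.sum_add_distrib]
  have key : ∀ r : ℕ, (x + 1) ^ r + (x - 1) ^ r
      = ∑ i ∈ Finset.range (r + 1), (if Even (r - i) then 2 * (x ^ i * (r.choose i : K)) else 0) := by
    intro r
    rw [sub_eq_add_neg, add_pow, add_pow, ← Finset.sum_add_distrib]
    apply Finset.sum_congr rfl
    intro i _
    split_ifs with h
    · rw [h.neg_one_pow]; ring
    · rw [(Nat.not_even_iff_odd.mp h).neg_one_pow]; ring
  have h1 : ∀ j ∈ Finset.range (m + 1),
      (m.choose j : K) * e j * (x + 1) ^ (m - j) + (m.choose j : K) * e j * (x - 1) ^ (m - j)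
      = ∑ i ∈ Finset.range (m + 1), if i + j ≤ m then
          2 * x ^ i * (m.choose i : K) *
            (if Even (m - i - j) then ((m - i).choose j : K) * e j else 0) else 0 := by
    intro j hj
    have hj : j ≤ m := by simpa [Nat.lt_succ_iff] using hj
    rw [← mul_add, key, Finset.mul_sum, ← Finset.sum_filter (fun i => i + j ≤ m)]
    have : Finset.filter (fun i => i + j ≤ m) (Finset.range (m + 1)) = Finset.range (m - j + 1) := by
      ext i; simp; omega
    rw [this]
    apply Finset.sum_congr rfl
    intro i hi
    have hi : i ≤ m - j := by simpa [Nat.lt_succ_iff] using hi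
    have e1 : m - i - j = m - j - i := by omega
    rw [e1]
    split_ifs
    · have hc : (m.choose j * (m - j).choose i : ℕ) = m.choose i * (m - i).choose j := by
        have a1 := Nat.choose_mul (n := m) (k := i + j) (s := j) (by omega)
        have a2 := Nat.choose_mul (n := m) (k := i + j) (s := i) (by omega)
        rw [show i + j - j = i by omega] at a1
        rw [show i + j - i = j by omega] at a2
        rw [← a1, ← a2, Nat.choose_symm_add]
      have hc' : (m.choose j : K) * (m - j).choose i = m.choose i * (m - i).choose j := by
        have := congrArg (Nat.cast : ℕ → K) hc
        push_cast at this
        exact this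
      linear_combination 2 * x ^ i * e j * hc'
    · simp
  rw [Finset.sum_congr rfl h1, Finset.sum_comm]
  have h2 : ∀ i ∈ Finset.range (m + 1), (∑ j ∈ Finset.range (m + 1), if i + j ≤ m then
          2 * x ^ i * (m.choose i : K) *
            (if Even (m - i - j) then ((m - i).choose j : K) * e j else 0) else 0)
      = if i = m then 2 * x ^ m else 0 := by
    intro i hi
    have hi : i ≤ m := by simpa [Nat.lt_succ_iff] using hi
    rw [← Finset.sum_filter]
    have : Finset.filter (fun j => i + j ≤ m) (Finset.range (m + 1)) = Finset.range (m - i + 1) := by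
      ext i; simp; omega
    rw [this, ← Finset.mul_sum, he (m - i)]
    by_cases h : i = m
    · subst h; simp
    · rw [if_neg h, if_neg (by omega), mul_zero]
  rw [Finset.sum_congr rfl h2]
  simp

theorem e_odd (e : ℕ → K) (he : ∀ n, ∑ j ∈ Finset.range (n + 1),
      (if Even (n - j) then (n.choose j : K) * e j else 0) = if n = 0 then 1 else 0)
    (n : ℕ) (hn : Odd n) : e n = 0 := by
  induction n using Nat.strong_induction_on with
  | _ n ih =>
    have h := he n
    rw [Finset.sum_range_succ, Finset.sum_eq_zero] at h
    · have : n ≠ 0 := by rintro rfl; simp at hn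
      simpa [this] using h
    · intro j hj
      have hj : j < n := by simpa using hj
      split_ifs with hev
      · rw [ih j hj, mul_zero]
        have : n = (n - j) + j := by omega
        rw [this] at hn
        exact (Nat.odd_add'.mp hn).mpr hev
      · rfl

theorem eP_one (e : ℕ → K) (he : ∀ n, ∑ j ∈ Finset.range (n + 1),
      (if Even (n - j) then (n.choose j : K) * e j else 0) = if n = 0 then 1 else 0)
    (m : ℕ) (hm : Even m) (hm0 : m ≠ 0) : eP e m 1 = 0 := by
  have h := he m
  rw [if_neg hm0] at h
  rw [← h]
  unfold eP
  apply Finset.sum_congr rfl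
  intro j hj
  have hj : j ≤ m := by simpa [Nat.lt_succ_iff] using hj
  split_ifs with hev
  · simp
  · rw [e_odd e he j, mul_zero, zero_mul]
    rw [Nat.even_sub hj] at hev
    rw [← Nat.not_even_iff_odd]
    tauto

theorem alt_sum (e : ℕ → K) (he : ∀ n, ∑ j ∈ Finset.range (n + 1),
      (if Even (n - j) then (n.choose j : K) * e j else 0) = if n = 0 then 1 else 0)
    (m : ℕ) (hm : Even m) (hm0 : m ≠ 0) (n : ℕ) :
    2 * 2 ^ m * ∑ k ∈ Finset.range n, (-1) ^ (k + 1) * ((k : K) + 1) ^ m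
      = (-1) ^ n * eP e m (2 * n + 1) := by
  induction n with
  | zero => simp [eP_one e he m hm hm0]
  | succ n ih =>
    have h := eP_add e he m (2 * ((n : K) + 1))
    rw [mul_pow] at h
    rw [show 2 * ((n : K) + 1) - 1 = 2 * n + 1 by ring] at h
    rw [Finset.sum_range_succ, mul_add, ih]
    push_cast
    rw [pow_succ]
    linear_combination (-1) ^ n * h

end

/-- `q` reduces to `x` modulo `p`. -/
def Red (p : ℕ) (q : ℚ) (x : ZMod p) : Prop :=
  ∃ a b : ℤ, (b : ZMod p) ≠ 0 ∧ q * b = a ∧ x * b = a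

section
variable {p : ℕ} [Fact p.Prime]

theorem Red.int (z : ℤ) : Red p z z := ⟨z, 1, by simp, by simp, by simp⟩

theorem Red.nat (z : ℕ) : Red p z z := ⟨z, 1, by simp, by simp, by simp⟩

theorem Red.add {q r : ℚ} {x y : ZMod p} (h : Red p q x) (h' : Red p r y) :
    Red p (q + r) (x + y) := by
  obtain ⟨a, b, hb, h1, h2⟩ := h
  obtain ⟨c, d, hd, h3, h4⟩ := h'
  refine ⟨a * d + c * b, b * d, ?_, ?_, ?_⟩
  · push_cast; exact mul_ne_zero hb hd
  · push_cast; linear_combination d * h1 + b * h3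
  · push_cast; linear_combination d * h2 + b * h4

theorem Red.mul {q r : ℚ} {x y : ZMod p} (h : Red p q x) (h' : Red p r y) :
    Red p (q * r) (x * y) := by
  obtain ⟨a, b, hb, h1, h2⟩ := h
  obtain ⟨c, d, hd, h3, h4⟩ := h'
  refine ⟨a * c, b * d, ?_, ?_, ?_⟩
  · push_cast; exact mul_ne_zero hb hd
  · push_cast; linear_combination d * r * h1 + a * h3
  · push_cast; linear_combination d * y * h2 + a * h4

theorem Red.inv {q : ℚ} {x : ZMod p} (h : Red p q x) (hx : x ≠ 0) : Red p q⁻¹ x⁻¹ := by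
  obtain ⟨a, b, hb, h1, h2⟩ := h
  have ha : (a : ZMod p) ≠ 0 := by rw [← h2]; exact mul_ne_zero hx hb
  have hq : q ≠ 0 := by
    rintro rfl
    have : a = 0 := by simpa using h1.symm
    simp [this] at ha
  refine ⟨b, a, ha, ?_, ?_⟩
  · rw [← h1]; field_simp
  · rw [← h2]; field_simp

theorem Red.pow {q : ℚ} {x : ZMod p} (h : Red p q x) (k : ℕ) : Red p (q ^ k) (x ^ k) := by
  induction k with
  | zero => simpa using Red.nat (p := p) 1
  | succ k ih => rw [pow_succ, pow_succ]; exact ih.mul h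

theorem Red.sum (s : Finset ℕ) (f : ℕ → ℚ) (g : ℕ → ZMod p) (h : ∀ i ∈ s, Red p (f i) (g i)) :
    Red p (∑ i ∈ s, f i) (∑ i ∈ s, g i) := by
  induction s using Finset.induction_on with
  | empty => simpa using Red.nat (p := p) 0
  | insert a s ha ih =>
    rw [Finset.sum_insert ha, Finset.sum_insert ha]
    exact (h a (by simp)).add (ih (fun i hi => h i (by simp [hi])))

theorem Red.zero {q : ℚ} (h : Red p q 0) : (p : ℤ) ∣ q.num := by
  obtain ⟨a, b, hb, h1, h2⟩ := h
  have ha : (p : ℤ) ∣ a := by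
    rw [← ZMod.intCast_zmod_eq_zero_iff_dvd, ← h2, zero_mul]
  have h3 : q.num * b = a * q.den := by
    have := Rat.num_div_den q
    have hd : (q.den : ℚ) ≠ 0 := by exact_mod_cast q.den_nz
    have h4 : (q.num : ℚ) = q * q.den := by rw [eq_comm, Rat.mul_den_eq_num]
    have : (q.num : ℚ) * b = a * q.den := by rw [h4, ← h1]; ring
    exact_mod_cast this
  have hpp : Prime (p : ℤ) := Nat.prime_iff_prime_int.mp Fact.out
  have : (p : ℤ) ∣ q.num * b := by rw [h3]; exact Dvd.dvd.mul_right ha _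
  rcases hpp.dvd_or_dvd this with h | h
  · exact h
  · exact absurd ((ZMod.intCast_zmod_eq_zero_iff_dvd b p).mpr h) hb

end

theorem euler_rec (n : ℕ) : ∑ j ∈ Finset.range (n + 1),
      (if Even (n - j) then (n.choose j : ℚ) * eulerNumber j else 0) = if n = 0 then 1 else 0 := by
  cases n with
  | zero => simp [eulerNumber]
  | succ n =>
    rw [Finset.sum_range_succ]
    have h : eulerNumber (n + 1) = -∑ j ∈ Finset.range (n + 1),
        if Even (n + 1 - j) then ((n + 1).choose (n + 1 - j) : ℚ) * eulerNumber j else 0 := by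
      rw [eulerNumber]
      rw [← Finset.sum_attach (Finset.range (n + 1))]
    have h2 : ∑ j ∈ Finset.range (n + 1),
        (if Even (n + 1 - j) then ((n + 1).choose (n + 1 - j) : ℚ) * eulerNumber j else 0)
        = ∑ j ∈ Finset.range (n + 1),
        (if Even (n + 1 - j) then ((n + 1).choose j : ℚ) * eulerNumber j else 0) := by
      apply Finset.sum_congr rfl
      intro j hj
      have hj : j < n + 1 := by simpa using hj
      rw [Nat.choose_symm (by omega)]
    rw [h2] at h
    simp [h]

theorem euler_int (n : ℕ) : ∃ z : ℤ, eulerNumber n = z := by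
  induction n using Nat.strong_induction_on with
  | _ n ih =>
    have h := euler_rec n
    rw [Finset.sum_range_succ] at h
    simp at h
    choose! f hf using ih
    refine ⟨(if n = 0 then 1 else 0) - ∑ j ∈ Finset.range n,
      (if Even (n - j) then (n.choose j : ℤ) * f j else 0), ?_⟩
    push_cast
    rw [← h, eq_sub_iff_add_eq, add_comm]
    congr 1
    apply Finset.sum_congr rfl
    intro j hj
    rw [hf j (by simpa using hj)]

theorem H2_eq (k : ℕ) : H2 k = hSeq ℚ k := by
  induction k with
  | zero => simp [H2, hSeq]
  | succ k ih =>
    unfold H2 hSeq at *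
    rw [Finset.sum_Icc_succ_top (by omega), Finset.sum_range_succ, ih]
    push_cast
    rfl

theorem stmt19 (p : ℕ) (hp : p.Prime) (hp3 : 3 < p) :
    ratModEq p
      (∑ k ∈ Finset.Icc 1 ((p - 1) / 2), ((2 * k).choose k : ℚ) ^ 2 / 16 ^ k * H2 k)
      (-4 * eulerNumber (p - 3)) := by
  haveI : Fact p.Prime := ⟨hp⟩
  have hodd : p % 2 = 1 := by
    rcases hp.eq_two_or_odd with h | h <;> omega
  obtain ⟨N, hN⟩ : ∃ N, N = (p - 1) / 2 := ⟨_, rfl⟩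
  rw [← hN]
  have hpN : p = 2 * N + 1 := by omega
  have hnz : ∀ k : ℕ, 0 < k → k < p → (k : ZMod p) ≠ 0 := by
    intro k h1 h2 h
    rw [ZMod.natCast_eq_zero_iff] at h
    exact absurd (Nat.le_of_dvd h1 h) (by omega)
  have hN1 : ∀ k ≤ N, (k : ZMod p) + 1 ≠ 0 := by
    intro k hk
    have := hnz (k + 1) (by omega) (by omega)
    exact_mod_cast this
  have h2 : (2 : ZMod p) ≠ 0 := by exact_mod_cast hnz 2 (by omega) (by omega)
  have hNx : 2 * (N : ZMod p) + 1 = 0 := by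
    have : ((2 * N + 1 : ℕ) : ZMod p) = 0 := by rw [← hpN]; simp
    exact_mod_cast this
  choose e he using euler_int
  have heR : ∀ n, ∑ j ∈ Finset.range (n + 1),
      (if Even (n - j) then (n.choose j : ZMod p) * (e j : ZMod p) else 0)
        = if n = 0 then 1 else 0 := by
    intro n
    have h := euler_rec n
    simp only [he] at h
    have h' : ∑ j ∈ Finset.range (n + 1),
      (if Even (n - j) then (n.choose j : ℤ) * (e j : ℤ) else 0) = if n = 0 then 1 else 0 := by
      exact_mod_cast h
    have := congrArg (Int.cast : ℤ → ZMod p) h'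
    push_cast at this
    exact this
  -- value of the alternating sum
  have hm : Even (p - 3) := ⟨N - 1, by omega⟩
  have halt := alt_sum (fun n => (e n : ZMod p)) heR (p - 3) hm (by omega) N
  rw [hNx] at halt
  have hP0 : eP (fun n => (e n : ZMod p)) (p - 3) 0 = e (p - 3) := by
    unfold eP
    rw [Finset.sum_range_succ, Finset.sum_eq_zero]
    · simp
    · intro j hj
      have hj : j < p - 3 := by simpa using hj
      rw [zero_pow (by omega), mul_zero]
  rw [hP0] at halt
  have hfer : ∀ x : ZMod p, x ≠ 0 → x ^ (p - 3) * x ^ 2 = 1 := by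
    intro x hx
    rw [← pow_add, show p - 3 + 2 = p - 1 by omega]
    exact ZMod.pow_card_sub_one_eq_one hx
  have hsum : ∑ k ∈ Finset.range N, (-1) ^ (k + 1) / ((k : ZMod p) + 1) ^ 2
      = ∑ k ∈ Finset.range N, (-1) ^ (k + 1) * ((k : ZMod p) + 1) ^ (p - 3) := by
    apply Finset.sum_congr rfl
    intro k hk
    have hk : k < N := by simpa using hk
    have h0 := hN1 k hk.le
    rw [div_eq_iff (pow_ne_zero 2 h0), mul_assoc, hfer _ h0, mul_one]
  have hS := S_eval (K := ZMod p) N N hN1 le_rfl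
  have hS2 : ∑ k ∈ Finset.range (N + 1), aSeq (N : ZMod p) k * hSeq (ZMod p) k
      = -4 * (e (p - 3) : ZMod p) := by
    rw [hS, hsum]
    have hf2 := hfer 2 h2
    have hs : ((-1 : ZMod p) ^ N) * (-1) ^ N = 1 := by rw [← mul_pow]; simp
    generalize ∑ k ∈ Finset.range N, (-1) ^ (k + 1) * ((k : ZMod p) + 1) ^ (p - 3) = A at *
    linear_combination (-4 * (-1) ^ N) * halt + 2 * (-1) ^ N * A * hf2
      - 4 * (e (p - 3) : ZMod p) * hs
  -- reduce
  have hH : ∀ k ≤ N, Red p (H2 k) (hSeq (ZMod p) k) := by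
    intro k hk
    rw [H2_eq]
    unfold hSeq
    apply Red.sum
    intro i hi
    have hi : i < k := by simpa using hi
    rw [one_div, one_div]
    refine Red.inv ?_ (pow_ne_zero 2 (hN1 i (by omega)))
    apply Red.pow
    have := Red.nat (p := p) (i + 1)
    push_cast at this
    exact this
  have h16 : (16 : ZMod p) ≠ 0 := by
    rw [show (16 : ZMod p) = 2 ^ 4 by norm_num]
    exact pow_ne_zero 4 h2
  have hL : Red p (∑ k ∈ Finset.Icc 1 N, ((2 * k).choose k : ℚ) ^ 2 / 16 ^ k * H2 k)
      (∑ k ∈ Finset.Icc 1 N, aSeq (N : ZMod p) k * hSeq (ZMod p) k) := by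
    apply Red.sum
    intro k hk
    have hk : 1 ≤ k ∧ k ≤ N := by simpa using hk
    refine Red.mul ?_ (hH k hk.2)
    have hc := choose_eq_aSeq (N : ZMod p) (by linear_combination hNx) h2 k
      (fun i hi => hN1 i (by omega))
    have : aSeq (N : ZMod p) k = ((2 * k).choose k : ZMod p) ^ 2 * (16 ^ k)⁻¹ := by
      rw [hc]; field_simp
    rw [this, div_eq_mul_inv]
    exact ((Red.nat _).pow 2).mul (Red.inv ((Red.nat (p := p) 16).pow k) (pow_ne_zero k h16))
  have hI : ∑ k ∈ Finset.Icc 1 N, aSeq (N : ZMod p) k * hSeq (ZMod p) k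
      = ∑ k ∈ Finset.range (N + 1), aSeq (N : ZMod p) k * hSeq (ZMod p) k := by
    apply Finset.sum_subset
    · intro k; simp
    · intro k h1 h2
      have : k = 0 := by simp at h1 h2; omega
      subst this; simp [hSeq]
  rw [hI, hS2] at hL
  unfold ratModEq
  apply Red.zero
  have hE : Red p (4 * eulerNumber (p - 3)) (4 * (e (p - 3) : ZMod p)) := by
    rw [he]
    exact (Red.nat (p := p) 4).mul (Red.int _)
  have := hL.add hE
  rw [show -4 * (e (p - 3) : ZMod p) + 4 * (e (p - 3) : ZMod p) = 0 by ring] at this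
  rw [sub_eq_add_neg]
  convert this using 2
  ring
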